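/- arXiv:1909.05850 — 4 statements merged into one kernel-verified Lean document; each statement's English description precedes it below -/
import Mathlib

section
/- (Direct-method identity.) Define r̄_e(s) = ∫_A r̄(s,a) dπ_e(s)(a) and the value function v(s) = Σ_{k=0}^∞ γ^k ∫_S r̄_e(s') d((δ_s).bind K_e^k)(s'), where δ_s is the Dirac measure at s. Then v is measurable with 0 ≤ v ≤ R_max/(1−γ), and ∫_S r̄_e d d_γ = (1−γ) · ∫_S v dμ_e; that is, the policy value ρ^{π_e} equals (1−γ)·E_{μ_e}[v(s_0)]. -/
open MeasureTheory ProbabilityTheory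
open scoped ENNReal

noncomputable section

variable {S A : Type*} [MeasurableSpace S] [MeasurableSpace A]

/-- `t`-fold composition of a Markov kernel with itself. -/
def kpow {α : Type*} [MeasurableSpace α] (K : Kernel α α) : ℕ → Kernel α α
  | 0 => Kernel.id
  | n + 1 => K ∘ₖ kpow K n

/-- The state-transition kernel induced by a policy `π`. -/
def stateKernel (P : Kernel (S × A) S) (π : Kernel S A) [IsSFiniteKernel π] :
    Kernel S S :=
  P ∘ₖ (Kernel.id ×ₖ π)

/-- The discounted average visitation measure. -/
def dgamma (γ : ℝ) (μe : Measure S) (Ke : Kernel S S) : Measure S :=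
  ENNReal.ofReal (1 - γ) •
    Measure.sum fun t : ℕ => ENNReal.ofReal γ ^ t • μe.bind fun s => kpow Ke t s

instance kpow_isMarkov {α : Type*} [MeasurableSpace α] (K : Kernel α α) [IsMarkovKernel K] (n : ℕ) :
    IsMarkovKernel (kpow K n) := by
  induction n with
  | zero => rw [kpow]; infer_instance
  | succ n ih => rw [kpow]; infer_instance

instance stateKernel_isMarkov (P : Kernel (S × A) S) (π : Kernel S A) [IsMarkovKernel P]
    [IsMarkovKernel π] : IsMarkovKernel (stateKernel P π) := by
  rw [stateKernel]; infer_instance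

lemma integral_mem_of_ae {α : Type*} [MeasurableSpace α] (μ : Measure α) [IsProbabilityMeasure μ]
    (f : α → ℝ) (C : ℝ) (hm : AEStronglyMeasurable f μ) (h : ∀ᵐ x ∂μ, f x ∈ Set.Icc 0 C) :
    Integrable f μ ∧ ∫ x, f x ∂μ ∈ Set.Icc 0 C := by
  have hi : Integrable f μ := by
    refine Integrable.of_bound hm C ?_
    filter_upwards [h] with x hx
    rw [Real.norm_of_nonneg hx.1]; exact hx.2
  refine ⟨hi, integral_nonneg_of_ae (h.mono fun x hx => hx.1), ?_⟩
  calc ∫ x, f x ∂μ ≤ ∫ x, C ∂μ :=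
        integral_mono_ae hi (integrable_const C) (h.mono fun x hx => hx.2)
    _ = C := by simp

/-- direct-method identity: the value function
`v(s) = Σ_k γ^k ∫ r̄_e d((δ_s).bind K_e^k)` is measurable, takes values in
`[0, R_max/(1−γ)]`, and `∫ r̄_e d d_γ = (1−γ)·∫ v dμ_e`. -/
theorem direct_method_identity
    (P : Kernel (S × A) S) [IsMarkovKernel P]
    (Rmax : ℝ) (hRmax : 0 < Rmax)
    (R : Kernel (S × A) ℝ) [IsMarkovKernel R]
    (hR : ∀ p : S × A, R p (Set.Icc (0 : ℝ) Rmax)ᶜ = 0)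
    (γ : ℝ) (hγ0 : 0 < γ) (hγ1 : γ < 1)
    (πe πb : Kernel S A) [IsMarkovKernel πe] [IsMarkovKernel πb]
    (μe μb : Measure S) [IsProbabilityMeasure μe] [IsProbabilityMeasure μb]
    -- the mean reward of the target policy at a state
    (rbarE : S → ℝ)
    (hrbarE : ∀ s, rbarE s = ∫ a, (∫ r, r ∂(R (s, a))) ∂(πe s))
    -- the value function
    (v : S → ℝ)
    (hv : ∀ s, v s = ∑' k : ℕ, γ ^ k *
      ∫ s', rbarE s' ∂((Measure.dirac s).bind fun u => kpow (stateKernel P πe) k u)) :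
    Measurable v ∧
      (∀ s, 0 ≤ v s ∧ v s ≤ Rmax / (1 - γ)) ∧
      ∫ s, rbarE s ∂(dgamma γ μe (stateKernel P πe)) = (1 - γ) * ∫ s, v s ∂μe := by
  have hrm : StronglyMeasurable fun p : S × A => ∫ r, r ∂(R p) :=
    StronglyMeasurable.integral_kernel (κ := R) (f := fun r : ℝ => r) stronglyMeasurable_id
  have hrb : ∀ p : S × A, ∫ r, r ∂(R p) ∈ Set.Icc 0 Rmax := fun p =>
    (integral_mem_of_ae (R p) (fun r => r) Rmax aestronglyMeasurable_id (hR p)).2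
  have hem : StronglyMeasurable rbarE := by
    have : rbarE = fun s => ∫ a, (∫ r, r ∂(R (s, a))) ∂(πe s) := funext hrbarE
    rw [this]
    exact hrm.integral_kernel_prod_right'
  have heb : ∀ s, rbarE s ∈ Set.Icc 0 Rmax := fun s => by
    rw [hrbarE]
    exact (integral_mem_of_ae (πe s) _ Rmax
      (hrm.comp_measurable measurable_prodMk_left).aestronglyMeasurable
      (Filter.Eventually.of_forall fun a => hrb (s, a))).2
  set K := stateKernel P πe with hK
  set w : ℕ → S → ℝ := fun k s => ∫ s', rbarE s' ∂(kpow K k s) with hw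
  have hwm : ∀ k, StronglyMeasurable (w k) := fun k => hem.integral_kernel
  have hwb : ∀ k s, w k s ∈ Set.Icc 0 Rmax := fun k s =>
    (integral_mem_of_ae (kpow K k s) _ Rmax hem.aestronglyMeasurable
      (Filter.Eventually.of_forall heb)).2
  have hv' : ∀ s, v s = ∑' k : ℕ, γ ^ k * w k s := fun s => by
    rw [hv]
    refine tsum_congr fun k => ?_
    rw [Measure.dirac_bind (kpow K k).measurable]
  have hg : HasSum (fun k : ℕ => γ ^ k * Rmax) (Rmax / (1 - γ)) := by
    have := (hasSum_geometric_of_lt_one hγ0.le hγ1).mul_right Rmax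
    rwa [inv_mul_eq_div] at this
  have hle : ∀ k s, γ ^ k * w k s ≤ γ ^ k * Rmax := fun k s =>
    mul_le_mul_of_nonneg_left (hwb k s).2 (by positivity)
  have hnn : ∀ k s, 0 ≤ γ ^ k * w k s := fun k s => mul_nonneg (by positivity) (hwb k s).1
  have hsum : ∀ s, HasSum (fun k : ℕ => γ ^ k * w k s) (v s) := fun s => by
    rw [hv']
    exact (Summable.of_nonneg_of_le (fun k => hnn k s) (fun k => hle k s) hg.summable).hasSum
  have hint : ∀ k, Integrable (w k) μe ∧ ∫ s, w k s ∂μe ∈ Set.Icc 0 Rmax := fun k =>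
    integral_mem_of_ae μe _ Rmax (hwm k).aestronglyMeasurable (Filter.Eventually.of_forall (hwb k))
  have hsum2 : Summable fun k : ℕ => γ ^ k * ∫ s, w k s ∂μe :=
    Summable.of_nonneg_of_le (fun k => mul_nonneg (by positivity) (hint k).2.1)
      (fun k => mul_le_mul_of_nonneg_left (hint k).2.2 (by positivity)) hg.summable
  refine ⟨?_, fun s => ⟨(hsum s).nonneg fun k => hnn k s,
    hasSum_le (fun k => hle k s) (hsum s) hg⟩, ?_⟩
  · refine measurable_of_tendsto_metrizable (f := fun n s => ∑ k ∈ Finset.range n, γ ^ k * w k s)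
      (fun n => ?_) (tendsto_pi_nhds.2 fun s => (hsum s).tendsto_sum_nat)
    exact Finset.measurable_fun_sum _ fun k _ => (hwm k).measurable.const_mul _
  · have hVint : ∫ s, v s ∂μe = ∑' k : ℕ, γ ^ k * ∫ s, w k s ∂μe := by
      have h := hasSum_integral_of_summable_integral_norm (μ := μe)
        (F := fun k s => γ ^ k * w k s) (fun k => (hint k).1.const_mul _) (by
          refine hsum2.congr fun k => ?_
          rw [← integral_const_mul]
          exact integral_congr_ae (Filter.Eventually.of_forall fun s =>
            (Real.norm_of_nonneg (hnn k s)).symm))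
      have h2 := h.tsum_eq
      simp only [integral_const_mul] at h2
      rw [h2]
      exact integral_congr_ae (Filter.Eventually.of_forall fun s => hv' s)
    have hprob : ∀ k, IsProbabilityMeasure (μe.bind fun s => kpow K k s) := fun k =>
      inferInstanceAs (IsProbabilityMeasure (μe.bind (kpow K k)))
    have hbi : ∀ k, Integrable rbarE (μe.bind fun s => kpow K k s) := fun k =>
      (integral_mem_of_ae _ _ Rmax hem.aestronglyMeasurable (Filter.Eventually.of_forall heb)).1
    have hbind : ∀ k, ∫ s, rbarE s ∂(μe.bind fun s => kpow K k s) = ∫ s, w k s ∂μe := fun k =>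
      Kernel.integral_comp (η := kpow K k) (κ := Kernel.const Unit μe) (a := ()) (hbi k)
    have hterm : ∀ k : ℕ, ∫ s, rbarE s ∂(ENNReal.ofReal γ ^ k • μe.bind fun s => kpow K k s)
        = γ ^ k * ∫ s, w k s ∂μe := fun k => by
      rw [integral_smul_measure, hbind, ENNReal.toReal_pow, ENNReal.toReal_ofReal hγ0.le,
        smul_eq_mul]
    have hnorm : ∀ s, ‖rbarE s‖ = rbarE s := fun s => Real.norm_of_nonneg (heb s).1
    rw [dgamma, integral_smul_measure, integral_sum_measure, hVint,
      ENNReal.toReal_ofReal (by linarith), smul_eq_mul]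
    · simp only [hterm]
    · refine integrable_sum_measure (fun k => (hbi k).smul_measure (by simp)) ?_
      simp only [hnorm, hterm]
      exact hsum2

end
end

section
/- (Martingale structure of the efficient estimating function along trajectories.) For every t ≥ 0, E_{P_b}[φ(s_t, a_t, r_t, s_{t+1})] = 0, and for every t ≥ 1, E_{P_b}[φ(s_0, a_0, r_0, s_1) · φ(s_t, a_t, r_t, s_{t+1})] = 0. -/
open MeasureTheory ProbabilityTheory
open scoped ENNReal

noncomputable section

variable {S A : Type*} [MeasurableSpace S] [MeasurableSpace A]

/-- The law of the initial triple `(s₀, a₀, r₀)` under the behavior policy. -/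
def initLaw (R : Kernel (S × A) ℝ) (πb : Kernel S A) (μb : Measure S) :
    Measure (S × A × ℝ) :=
  μb.bind fun s => (πb s).bind fun a => (R (s, a)).map fun r => (s, a, r)

/-- The one-step transition of the behavior trajectory: from `(s, a, r)` draw
`s' ~ P (s, a)`, `a' ~ π_b s'`, `r' ~ R (s', a')` and return `(s', a', r')`. -/
def stepLaw (P : Kernel (S × A) S) (R : Kernel (S × A) ℝ) (πb : Kernel S A)
    (x : S × A × ℝ) : Measure (S × A × ℝ) :=
  (P (x.1, x.2.1)).bind fun s' => (πb s').bind fun a' =>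
    (R (s', a')).map fun r' => (s', a', r')

/-- The law of the length-`(n+1)` prefix `((s₀,a₀,r₀), …, (sₙ,aₙ,rₙ))` of the behavior
trajectory. -/
def finLaw (P : Kernel (S × A) S) (R : Kernel (S × A) ℝ) (πb : Kernel S A)
    (μb : Measure S) : (n : ℕ) → Measure (Fin (n + 1) → S × A × ℝ)
  | 0 => (initLaw R πb μb).map fun x => fun _ => x
  | n + 1 => (finLaw P R πb μb n).bind fun path =>
      (stepLaw P R πb (path (Fin.last n))).map (Fin.snoc path)

/-- The transition observed at time `t` along a trajectory: `(s_t, a_t, r_t, s_{t+1})`. -/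
def Xt (t : ℕ) (ω : ℕ → S × A × ℝ) : S × A × ℝ × S :=
  ((ω t).1, (ω t).2.1, (ω t).2.2, (ω (t + 1)).1)

section Helpers

/-- The kernel drawing `(s, a, r)` from `s`. -/
def rowK (R : Kernel (S × A) ℝ) (πb : Kernel S A) : Kernel S (S × A × ℝ) :=
  Kernel.id ×ₖ (πb ⊗ₖ R)

instance (R : Kernel (S × A) ℝ) [IsMarkovKernel R] (πb : Kernel S A) [IsMarkovKernel πb] :
    IsMarkovKernel (rowK R πb) := by unfold rowK; infer_instance

lemma rowK_apply (R : Kernel (S × A) ℝ) [IsMarkovKernel R] (πb : Kernel S A)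
    [IsMarkovKernel πb] (s : S) :
    rowK R πb s = ((πb ⊗ₖ R) s).map (fun y => (s, y)) := by
  ext B hB
  rw [rowK, Kernel.id_prod_apply' _ _ hB, Measure.map_apply (by fun_prop) hB]

lemma row_meas (R : Kernel (S × A) ℝ) [IsMarkovKernel R] (s : S) :
    Measurable fun a : A => (R (s, a)).map fun r => (s, a, r) := by
  have h : (fun a : A => (R (s, a)).map fun r => (s, a, r)) =
      fun a => (Kernel.deterministic (fun a : A => (s, a)) (by fun_prop) ×ₖ
        R.comap (fun a : A => (s, a)) (by fun_prop)).map
          (fun p => (p.1.1, p.1.2, p.2)) a := by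
    funext a
    ext B hB
    rw [Kernel.map_apply' _ (by fun_prop) _ hB, Kernel.deterministic_prod_apply' _ _ _
      ((by fun_prop : Measurable fun p : (S × A) × ℝ => (p.1.1, p.1.2, p.2)) hB),
      Measure.map_apply (by fun_prop) hB, Kernel.comap_apply]
    rfl
  rw [h]
  exact Kernel.measurable _

lemma row_eq (R : Kernel (S × A) ℝ) [IsMarkovKernel R] (πb : Kernel S A)
    [IsMarkovKernel πb] (s : S) :
    ((πb s).bind fun a => (R (s, a)).map fun r => (s, a, r)) = rowK R πb s := by
  ext B hB
  rw [Measure.bind_apply hB (row_meas R s).aemeasurable, rowK, Kernel.id_prod_apply' _ _ hB,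
    Kernel.compProd_apply ((by fun_prop : Measurable fun y : A × ℝ => (s, y)) hB)]
  refine lintegral_congr fun a => ?_
  rw [Measure.map_apply (by fun_prop) hB]
  rfl

/-- The one-step kernel. -/
def stepK (P : Kernel (S × A) S) (R : Kernel (S × A) ℝ) (πb : Kernel S A) :
    Kernel (S × A × ℝ) (S × A × ℝ) :=
  rowK R πb ∘ₖ P.comap (fun x : S × A × ℝ => (x.1, x.2.1)) (by fun_prop)

instance (P : Kernel (S × A) S) [IsMarkovKernel P] (R : Kernel (S × A) ℝ) [IsMarkovKernel R]
    (πb : Kernel S A) [IsMarkovKernel πb] :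
    IsMarkovKernel (stepK P R πb) := by unfold stepK; infer_instance

lemma stepLaw_eq (P : Kernel (S × A) S) (R : Kernel (S × A) ℝ) [IsMarkovKernel R]
    (πb : Kernel S A) [IsMarkovKernel πb] (x : S × A × ℝ) :
    stepLaw P R πb x = stepK P R πb x := by
  unfold stepLaw stepK
  simp_rw [row_eq]
  rw [Kernel.comp_apply, Kernel.comap_apply]

lemma initLaw_eq (R : Kernel (S × A) ℝ) [IsMarkovKernel R]
    (πb : Kernel S A) [IsMarkovKernel πb] (μb : Measure S) :
    initLaw R πb μb = μb.bind (rowK R πb) := by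
  unfold initLaw
  simp_rw [row_eq]

lemma meas_snoc {X : Type*} [MeasurableSpace X] (n : ℕ) :
    Measurable fun p : (Fin (n + 1) → X) × X =>
      (Fin.snoc p.1 p.2 : Fin (n + 1 + 1) → X) := by
  rw [measurable_pi_iff]
  intro i
  induction i using Fin.lastCases with
  | last => simpa using measurable_snd
  | cast i => simp only [Fin.snoc_castSucc]; fun_prop

/-- The path extension kernel. -/
def extK (P : Kernel (S × A) S) (R : Kernel (S × A) ℝ) (πb : Kernel S A) (n : ℕ) :
    Kernel (Fin (n + 1) → S × A × ℝ) (Fin (n + 1 + 1) → S × A × ℝ) :=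
  (Kernel.id ×ₖ (stepK P R πb).comap (fun p : Fin (n + 1) → S × A × ℝ => p (Fin.last n))
    (by fun_prop)).map (fun p => Fin.snoc p.1 p.2)

lemma extK_markov (P : Kernel (S × A) S) [IsMarkovKernel P] (R : Kernel (S × A) ℝ)
    [IsMarkovKernel R] (πb : Kernel S A) [IsMarkovKernel πb] (n : ℕ) :
    IsMarkovKernel (extK P R πb n) := Kernel.IsMarkovKernel.map _ (meas_snoc n)

lemma meas_snoc' {X : Type*} [MeasurableSpace X] (n : ℕ) (p : Fin (n + 1) → X) :
    Measurable fun y : X => (Fin.snoc p y : Fin (n + 1 + 1) → X) :=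
  (meas_snoc n).comp (measurable_const.prodMk measurable_id)

lemma extK_apply (P : Kernel (S × A) S) [IsMarkovKernel P] (R : Kernel (S × A) ℝ)
    [IsMarkovKernel R] (πb : Kernel S A) [IsMarkovKernel πb] (n : ℕ)
    (p : Fin (n + 1) → S × A × ℝ) :
    extK P R πb n p = (stepK P R πb (p (Fin.last n))).map (Fin.snoc p) := by
  ext B hB
  rw [extK, Kernel.map_apply' _ (meas_snoc n) _ hB, Kernel.id_prod_apply' _ _ (meas_snoc n hB),
    Measure.map_apply (meas_snoc' n p) hB, Kernel.comap_apply]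
  rfl

lemma finLaw_succ_eq (P : Kernel (S × A) S) [IsMarkovKernel P] (R : Kernel (S × A) ℝ)
    [IsMarkovKernel R] (πb : Kernel S A) [IsMarkovKernel πb] (μb : Measure S) (n : ℕ) :
    finLaw P R πb μb (n + 1) = (finLaw P R πb μb n).bind (extK P R πb n) := by
  rw [finLaw]
  congr 1
  funext p
  rw [extK_apply, stepLaw_eq]

lemma finLaw_prob (P : Kernel (S × A) S) [IsMarkovKernel P] (R : Kernel (S × A) ℝ)
    [IsMarkovKernel R] (πb : Kernel S A) [IsMarkovKernel πb] (μb : Measure S)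
    [IsProbabilityMeasure μb] (n : ℕ) : IsProbabilityMeasure (finLaw P R πb μb n) := by
  induction n with
  | zero =>
    rw [finLaw, initLaw_eq]
    exact Measure.isProbabilityMeasure_map (by fun_prop)
  | succ n ih =>
    have := extK_markov P R πb n
    rw [finLaw_succ_eq]
    infer_instance

lemma int_bdd {α : Type*} [MeasurableSpace α] (μ : Measure α) [IsProbabilityMeasure μ]
    {f : α → ℝ} (hf : Measurable f) {C : ℝ} (hC : ∀ x, |f x| ≤ C) : Integrable f μ :=
  Integrable.of_bound hf.aestronglyMeasurable C (ae_of_all _ hC)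

lemma int_bind {α β : Type*} [MeasurableSpace α] [MeasurableSpace β] (μ : Measure α)
    [IsProbabilityMeasure μ] (κ : Kernel α β) [IsMarkovKernel κ]
    {f : β → ℝ} (hf : Measurable f) {C : ℝ} (hC : ∀ x, |f x| ≤ C) :
    ∫ y, f y ∂(μ.bind κ) = ∫ x, ∫ y, f y ∂(κ x) ∂μ :=
  by
  have h := Kernel.integral_comp (κ := Kernel.const Unit μ) (η := κ) (a := ()) (f := f)
    (int_bdd _ hf hC)
  simpa [Kernel.comp_apply] using h

lemma int_row (R : Kernel (S × A) ℝ) [IsMarkovKernel R] (πb : Kernel S A)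
    [IsMarkovKernel πb] (s : S)
    {f : S × A × ℝ → ℝ} (hf : Measurable f) {C : ℝ} (hC : ∀ x, |f x| ≤ C) :
    ∫ y, f y ∂(rowK R πb s) = ∫ a, ∫ r, f (s, a, r) ∂(R (s, a)) ∂(πb s) := by
  rw [rowK_apply, integral_map (by fun_prop) hf.aestronglyMeasurable,
    integral_compProd]
  exact int_bdd _ (by fun_prop) (C := C) (fun x => hC _)

lemma int_step (P : Kernel (S × A) S) [IsMarkovKernel P] (R : Kernel (S × A) ℝ)
    [IsMarkovKernel R] (πb : Kernel S A) [IsMarkovKernel πb] (x : S × A × ℝ)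
    {f : S × A × ℝ → ℝ} (hf : Measurable f) {C : ℝ} (hC : ∀ x, |f x| ≤ C) :
    ∫ y, f y ∂(stepK P R πb x) =
      ∫ s, ∫ a, ∫ r, f (s, a, r) ∂(R (s, a)) ∂(πb s) ∂(P (x.1, x.2.1)) := by
  rw [stepK, Kernel.comp_apply, int_bind _ _ hf hC, Kernel.comap_apply]
  refine integral_congr_ae (ae_of_all _ fun s => ?_)
  exact int_row R πb s hf hC

lemma int_finLaw_succ (P : Kernel (S × A) S) [IsMarkovKernel P] (R : Kernel (S × A) ℝ)
    [IsMarkovKernel R] (πb : Kernel S A) [IsMarkovKernel πb] (μb : Measure S)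
    [IsProbabilityMeasure μb] (n : ℕ)
    {f : (Fin (n + 1 + 1) → S × A × ℝ) → ℝ} (hf : Measurable f) {C : ℝ}
    (hC : ∀ x, |f x| ≤ C) :
    ∫ p, f p ∂(finLaw P R πb μb (n + 1)) =
      ∫ p, ∫ y, f (Fin.snoc p y) ∂(stepK P R πb (p (Fin.last n))) ∂(finLaw P R πb μb n) := by
  have := extK_markov P R πb n
  have := finLaw_prob P R πb μb n
  rw [finLaw_succ_eq, int_bind _ _ hf hC]
  refine integral_congr_ae (ae_of_all _ fun p => ?_)
  simp only
  rw [extK_apply, integral_map (meas_snoc' n p).aemeasurable hf.aestronglyMeasurable]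

lemma row_ae (R : Kernel (S × A) ℝ) [IsMarkovKernel R] (πb : Kernel S A)
    [IsMarkovKernel πb] {Rmax : ℝ}
    (hR : ∀ p : S × A, R p (Set.Icc (0 : ℝ) Rmax)ᶜ = 0) (s : S) :
    ∀ᵐ y ∂(rowK R πb s), y.2.2 ∈ Set.Icc (0 : ℝ) Rmax := by
  have hm : MeasurableSet {y : A × ℝ | y.2 ∈ Set.Icc (0 : ℝ) Rmax} :=
    measurable_snd measurableSet_Icc
  have hm' : MeasurableSet {y : S × A × ℝ | y.2.2 ∈ Set.Icc (0 : ℝ) Rmax} :=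
    (by fun_prop : Measurable fun y : S × A × ℝ => y.2.2) measurableSet_Icc
  rw [rowK_apply, ae_map_iff (by fun_prop) hm', Kernel.ae_compProd_iff hm]
  refine ae_of_all _ fun a => ?_
  rw [ae_iff]
  exact hR (s, a)

lemma finLaw_ae (P : Kernel (S × A) S) [IsMarkovKernel P] (R : Kernel (S × A) ℝ)
    [IsMarkovKernel R] (πb : Kernel S A) [IsMarkovKernel πb] (μb : Measure S)
    [IsProbabilityMeasure μb] {Rmax : ℝ}
    (hR : ∀ p : S × A, R p (Set.Icc (0 : ℝ) Rmax)ᶜ = 0) (n : ℕ) :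
    ∀ᵐ p ∂(finLaw P R πb μb n), (p (Fin.last n)).2.2 ∈ Set.Icc (0 : ℝ) Rmax := by
  have hm (n : ℕ) : MeasurableSet
      {p : Fin (n + 1) → S × A × ℝ | (p (Fin.last n)).2.2 ∈ Set.Icc (0 : ℝ) Rmax} :=
    (by fun_prop : Measurable fun p : Fin (n + 1) → S × A × ℝ => (p (Fin.last n)).2.2)
      measurableSet_Icc
  have hm' : MeasurableSet {y : S × A × ℝ | y.2.2 ∈ Set.Icc (0 : ℝ) Rmax} :=
    (by fun_prop : Measurable fun y : S × A × ℝ => y.2.2) measurableSet_Icc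
  cases n with
  | zero =>
    rw [finLaw, initLaw_eq, ae_map_iff (by fun_prop) (hm 0), Measure.ae_comp_iff hm']
    exact ae_of_all _ fun s => row_ae R πb hR s
  | succ n =>
    rw [finLaw_succ_eq, Measure.ae_comp_iff (hm _)]
    refine ae_of_all _ fun p => ?_
    rw [extK_apply, ae_map_iff (meas_snoc' n p).aemeasurable (hm _)]
    simp only [Fin.snoc_last]
    rw [stepK, Kernel.comp_apply, Measure.ae_comp_iff hm']
    exact ae_of_all _ fun s => row_ae R πb hR s

/-- Key computation: `u` plays the part of `w η`, `c` of the clipped reward and `v` of the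
value function; `G` is any bounded function of the history. -/
lemma key (P : Kernel (S × A) S) [IsMarkovKernel P] (R : Kernel (S × A) ℝ)
    [IsMarkovKernel R] (πb : Kernel S A) [IsMarkovKernel πb] (μb : Measure S)
    [IsProbabilityMeasure μb] (γ : ℝ)
    (u : S × A → ℝ) (hu : Measurable u) (Cu : ℝ) (hCu : ∀ x, |u x| ≤ Cu)
    (c : ℝ → ℝ) (hc : Measurable c) (Cc : ℝ) (hCc : ∀ x, |c x| ≤ Cc)
    (v : S → ℝ) (hv : Measurable v) (Cv : ℝ) (hCv : ∀ x, |v x| ≤ Cv)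
    (q : S × A → ℝ) (hq : Measurable q) (Cq : ℝ) (hCq : ∀ x, |q x| ≤ Cq)
    (hb : ∀ x, q x = (∫ r, c r ∂(R x)) + γ * ∫ s', v s' ∂(P x)) :
    (∫ p, u ((p 0).1, (p 0).2.1) * (c (p 0).2.2 + γ * v (p 1).1 - q ((p 0).1, (p 0).2.1))
      ∂(finLaw P R πb μb 1) = 0) ∧
    ∀ (t : ℕ) (G : (Fin (t + 1) → S × A × ℝ) × S → ℝ) (_ : Measurable G)
      (CG : ℝ) (_ : ∀ p, |G p| ≤ CG),
      ∫ p, G (fun i => p i.castSucc.castSucc, (p (Fin.last (t + 1)).castSucc).1) *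
        (u ((p (Fin.last (t + 1)).castSucc).1, (p (Fin.last (t + 1)).castSucc).2.1) *
        (c (p (Fin.last (t + 1)).castSucc).2.2 + γ * v (p (Fin.last (t + 2))).1
          - q ((p (Fin.last (t + 1)).castSucc).1, (p (Fin.last (t + 1)).castSucc).2.1)))
      ∂(finLaw P R πb μb (t + 2)) = 0 := by
  -- pointwise bounds
  have hbd (x : S × A) (r : ℝ) (z : S) :
      |u x * (c r + γ * v z - q x)| ≤ Cu * (Cc + |γ| * Cv + Cq) := by
    rw [abs_mul]
    have h1 : |c r + γ * v z - q x| ≤ Cc + |γ| * Cv + Cq := by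
      refine (abs_sub _ _).trans (add_le_add ((abs_add_le _ _).trans (add_le_add (hCc r) ?_)) (hCq x))
      rw [abs_mul]
      exact mul_le_mul_of_nonneg_left (hCv z) (abs_nonneg _)
    exact mul_le_mul (hCu x) h1 (abs_nonneg _) ((abs_nonneg _).trans (hCu x))
  -- integrating out the last state
  have hlast (x : S × A × ℝ) : ∫ y, u (x.1, x.2.1) * (c x.2.2 + γ * v y.1 - q (x.1, x.2.1))
      ∂(stepK P R πb x) = u (x.1, x.2.1) * (c x.2.2 - ∫ r, c r ∂(R (x.1, x.2.1))) := by
    rw [int_step P R πb x (by fun_prop) (fun y => hbd _ _ _)]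
    simp only [integral_const, probReal_univ, one_smul]
    rw [integral_const_mul, integral_sub, integral_add, integral_const_mul, hb (x.1, x.2.1)]
    · simp only [integral_const, probReal_univ, one_smul]
      ring
    · exact integrable_const _
    · exact (int_bdd _ hv hCv).const_mul _
    · exact (integrable_const _).add ((int_bdd _ hv hCv).const_mul _)
    · exact integrable_const _
  have hcm : Measurable fun x : S × A => ∫ r, c r ∂(R x) :=
    (hc.stronglyMeasurable.integral_kernel).measurable
  have hcb (x : S × A) : |∫ r, c r ∂(R x)| ≤ Cc := by
    have := norm_integral_le_of_norm_le_const (μ := R x) (f := c) (C := Cc) (ae_of_all _ hCc)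
    simpa using this
  have hbd2 (x : S × A) (r : ℝ) :
      |u x * (c r - ∫ r, c r ∂(R x))| ≤ Cu * (Cc + Cc) := by
    rw [abs_mul]
    exact mul_le_mul (hCu x) ((abs_sub _ _).trans (add_le_add (hCc r) (hcb x)))
      (abs_nonneg _) ((abs_nonneg _).trans (hCu x))
  -- integrating out the reward
  have hrew (x : S × A) (k : ℝ) :
      ∫ r, k * (u x * (c r - ∫ r, c r ∂(R x))) ∂(R x) = 0 := by
    rw [integral_const_mul, integral_const_mul, integral_sub (int_bdd _ hc hCc)
      (integrable_const _)]
    simp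
  obtain ⟨ρ, hρ⟩ : ∃ ρ : S × A → ℝ, ∀ x, ∫ r, c r ∂(R x) = ρ x := ⟨_, fun _ => rfl⟩
  simp only [hρ] at hlast hcm hbd2 hrew
  refine ⟨?_, ?_⟩
  · rw [int_finLaw_succ P R πb μb 0 (by fun_prop) (fun p => hbd _ _ _)]
    have e (p : Fin 1 → S × A × ℝ) (y : S × A × ℝ) :
        (Fin.snoc p y : Fin 2 → S × A × ℝ) 0 = p 0 := by
      simpa using (Fin.snoc_castSucc (α := fun _ => S × A × ℝ) y p 0)
    have e1 (p : Fin 1 → S × A × ℝ) (y : S × A × ℝ) :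
        (Fin.snoc p y : Fin 2 → S × A × ℝ) 1 = y := by
      simpa using (Fin.snoc_last (α := fun _ => S × A × ℝ) y p)
    have h0 : (Fin.last 0) = 0 := rfl
    simp only [Nat.zero_add, Nat.reduceAdd, e, e1, h0, hlast]
    rw [finLaw, initLaw_eq, integral_map (by fun_prop)
      (Measurable.aestronglyMeasurable (by fun_prop)),
      int_bind _ _ (by fun_prop) (fun x => hbd2 _ _)]
    refine integral_eq_zero_of_ae (ae_of_all _ fun s => ?_)
    simp only
    rw [int_row R πb s (by fun_prop) (fun x => hbd2 _ _)]
    refine integral_eq_zero_of_ae (ae_of_all _ fun a => ?_)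
    simpa using hrew (s, a) 1
  · intro t G hG CG hCG
    have hb3 (p x r z) : |G p * (u x * (c r + γ * v z - q x))| ≤
        CG * (Cu * (Cc + |γ| * Cv + Cq)) := by
      rw [abs_mul]
      exact mul_le_mul (hCG _) (hbd _ _ _) (abs_nonneg _) ((abs_nonneg _).trans (hCG p))
    have hb4 (p x r) : |G p * (u x * (c r - ρ x))| ≤
        CG * (Cu * (Cc + Cc)) := by
      rw [abs_mul]
      exact mul_le_mul (hCG _) (hbd2 _ _) (abs_nonneg _) ((abs_nonneg _).trans (hCG p))
    rw [int_finLaw_succ P R πb μb (t + 1) (by fun_prop) (fun p => hb3 _ _ _ _)]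
    simp only [Fin.snoc_castSucc, Fin.snoc_last, integral_const_mul]
    simp only [← integral_const_mul (u _)]
    simp only [hlast]
    rw [int_finLaw_succ P R πb μb t (by fun_prop) (fun p => hb4 _ _ _)]
    refine integral_eq_zero_of_ae (ae_of_all _ fun p => ?_)
    simp only [Fin.snoc_castSucc, Fin.snoc_last]
    rw [int_step P R πb _ (by fun_prop) (fun p => hb4 _ _ _)]
    simp only [hrew]
    simp

end Helpers

/-- martingale structure of the efficient estimating function along
trajectories: under the trajectory law `P_b`, the efficient estimating function
`φ(s,a,r,s') = w(s) η(s,a) (r + γ v(s') − q(s,a))` has mean zero at every time `t`, and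
is uncorrelated across time. -/
theorem efficient_influence_martingale_structure
    (P : Kernel (S × A) S) [IsMarkovKernel P]
    (Rmax : ℝ) (hRmax : 0 < Rmax)
    (R : Kernel (S × A) ℝ) [IsMarkovKernel R]
    (hR : ∀ p : S × A, R p (Set.Icc (0 : ℝ) Rmax)ᶜ = 0)
    (γ : ℝ) (hγ0 : 0 < γ) (hγ1 : γ < 1)
    (πe πb : Kernel S A) [IsMarkovKernel πe] [IsMarkovKernel πb]
    (μe μb : Measure S) [IsProbabilityMeasure μe] [IsProbabilityMeasure μb]
    -- the policy density ratio η, bounded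
    (η : S → A → ℝ) (hη_meas : Measurable (Function.uncurry η))
    (hη_bdd : ∃ C : ℝ, ∀ s a, 0 ≤ η s a ∧ η s a ≤ C)
    (hη : ∀ᵐ s ∂μb, πe s = (πb s).withDensity fun a => ENNReal.ofReal (η s a))
    -- the stationary density ratio w, a bounded measurable density of d_γ wrt μ_b
    (w : S → ℝ) (hw_meas : Measurable w)
    (hw_bdd : ∃ C : ℝ, ∀ s, 0 ≤ w s ∧ w s ≤ C)
    (hw : dgamma γ μe (stateKernel P πe) =
      μb.withDensity fun s => ENNReal.ofReal (w s))
    -- the q-function: bounded, measurable and satisfying the Bellman evaluation equation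
    (q : S → A → ℝ) (hq_meas : Measurable (Function.uncurry q))
    (hq_bdd : ∃ C : ℝ, ∀ s a, |q s a| ≤ C)
    (hq_bellman : ∀ s a, q s a =
      (∫ r, r ∂(R (s, a))) + γ * ∫ s', (∫ a', q s' a' ∂(πe s')) ∂(P (s, a)))
    -- the efficient estimating function φ
    (φ : S × A × ℝ × S → ℝ)
    (hφ : ∀ x : S × A × ℝ × S, φ x =
      w x.1 * η x.1 x.2.1 *
        (x.2.2.1 + γ * (∫ a, q x.2.2.2 a ∂(πe x.2.2.2)) - q x.1 x.2.1))
    -- the trajectory law P_b, characterized by its finite-dimensional prefixes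
    (Pb : Measure (ℕ → S × A × ℝ)) [IsProbabilityMeasure Pb]
    (hPb : ∀ n : ℕ, Pb.map (fun ω => fun i : Fin (n + 1) => ω i) = finLaw P R πb μb n) :
    (∀ t : ℕ, ∫ ω, φ (Xt t ω) ∂Pb = 0) ∧
      (∀ t : ℕ, 1 ≤ t → ∫ ω, φ (Xt 0 ω) * φ (Xt t ω) ∂Pb = 0) := by
  classical
  obtain ⟨Cη, hCη⟩ := hη_bdd
  obtain ⟨Cw, hCw⟩ := hw_bdd
  obtain ⟨Cq, hCq⟩ := hq_bdd
  set c : ℝ → ℝ := fun r => max 0 (min r Rmax) with hc_def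
  have hc : Measurable c := by fun_prop
  have hCc (r : ℝ) : |c r| ≤ Rmax := by
    rw [abs_of_nonneg (le_max_left _ _)]
    exact max_le hRmax.le (min_le_right _ _)
  have hcr (r : ℝ) (hr : r ∈ Set.Icc 0 Rmax) : c r = r := by
    simp [hc_def, hr.1, hr.2]
  set v : S → ℝ := fun s => ∫ a, q s a ∂(πe s) with hv_def
  have hv : Measurable v :=
    (StronglyMeasurable.integral_kernel_prod_right' (κ := πe) hq_meas.stronglyMeasurable).measurable
  have hCv (s : S) : |v s| ≤ Cq := by
    have := norm_integral_le_of_norm_le_const (μ := πe s) (f := q s) (C := Cq)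
      (ae_of_all _ (hCq s))
    simpa using this
  set u : S × A → ℝ := fun x => w x.1 * η x.1 x.2 with hu_def
  have hu : Measurable u := (hw_meas.comp measurable_fst).mul hη_meas
  have hCu (x : S × A) : |u x| ≤ Cw * Cη := by
    have h1 := hCw x.1
    have h2 := hCη x.1 x.2
    rw [abs_of_nonneg (mul_nonneg h1.1 h2.1)]
    exact mul_le_mul h1.2 h2.2 h2.1 (h1.1.trans h1.2)
  have hb (x : S × A) : Function.uncurry q x =
      (∫ r, c r ∂(R x)) + γ * ∫ s', v s' ∂(P x) := by
    have h := hq_bellman x.1 x.2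
    have h2 : ∫ r, c r ∂(R x) = ∫ r, r ∂(R x) := by
      refine integral_congr_ae ?_
      have : ∀ᵐ r ∂(R x), r ∈ Set.Icc 0 Rmax := by
        rw [ae_iff]; exact hR x
      filter_upwards [this] with r hr using hcr r hr
    rw [h2]
    exact h
  obtain ⟨k1, k2⟩ := key P R πb μb γ u hu _ hCu c hc _ hCc v hv _ hCv (Function.uncurry q)
    hq_meas Cq (fun x => hCq _ _) hb
  set ψ : S × A × ℝ × S → ℝ := fun x =>
    u (x.1, x.2.1) * (c x.2.2.1 + γ * v x.2.2.2 - Function.uncurry q (x.1, x.2.1)) with hψ_def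
  have hψ : Measurable ψ := by fun_prop
  have hCψ (x) : |ψ x| ≤ Cw * Cη * (Rmax + |γ| * Cq + Cq) := by
    simp only [hψ_def]
    rw [abs_mul]
    refine mul_le_mul (hCu _) ?_ (abs_nonneg _) ((abs_nonneg _).trans (hCu (x.1, x.2.1)))
    refine (abs_sub _ _).trans (add_le_add ((abs_add_le _ _).trans
      (add_le_add (hCc _) ?_)) (hCq _ _))
    rw [abs_mul]
    exact mul_le_mul_of_nonneg_left (hCv _) (abs_nonneg _)
  have hm (n : ℕ) : Measurable
      (fun (ω : ℕ → S × A × ℝ) => fun i : Fin (n + 1) => ω i) := by fun_prop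
  have hae (t : ℕ) : ∀ᵐ ω ∂Pb, φ (Xt t ω) = ψ (Xt t ω) := by
    have h := finLaw_ae P R πb μb hR t
    rw [← hPb t] at h
    have h := ae_of_ae_map (hm t).aemeasurable h
    filter_upwards [h] with ω hω
    simp only [Fin.val_last] at hω
    rw [hφ]
    simp only [hψ_def, Xt, hcr _ hω]
    rfl
  have hI (n : ℕ) (f : (Fin (n + 1) → S × A × ℝ) → ℝ) (hf : Measurable f) :
      ∫ ω, f (fun i : Fin (n + 1) => ω i) ∂Pb = ∫ p, f p ∂(finLaw P R πb μb n) := by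
    rw [← hPb n, integral_map (hm n).aemeasurable hf.aestronglyMeasurable]
  refine ⟨fun t => ?_, fun t ht => ?_⟩
  · rw [integral_congr_ae (hae t)]
    cases t with
    | zero =>
      rw [← k1, ← hI 1 _ (by fun_prop)]
      rfl
    | succ t =>
      have k := k2 t (fun _ => 1) (by fun_prop) 1 (by simp)
      simp only [one_mul] at k
      rw [← k, ← hI (t + 2) _ (by fun_prop)]
      rfl
  · rw [integral_congr_ae (g := fun ω => ψ (Xt 0 ω) * ψ (Xt t ω))
      (by filter_upwards [hae 0, hae t] with ω h0 h1; rw [h0, h1])]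
    obtain ⟨t, rfl⟩ : ∃ m, t = m + 1 := ⟨t - 1, by omega⟩
    cases t with
    | zero =>
      have k := k2 0 (fun p => ψ ((p.1 0).1, (p.1 0).2.1, (p.1 0).2.2, p.2))
        (by fun_prop) _ (fun p => hCψ _)
      rw [← k, ← hI 2 _ (by fun_prop)]
      rfl
    | succ t =>
      have k := k2 (t + 1) (fun p => ψ ((p.1 0).1, (p.1 0).2.1, (p.1 0).2.2, (p.1 1).1))
        (by fun_prop) _ (fun p => hCψ _)
      rw [← k, ← hI (t + 1 + 2) _ (by fun_prop)]
      rfl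

end
end

section
/- (Weighted Cauchy–Schwarz bound underlying Lemma 2, which states that the asymptotic variance of the direct method under a well-specified parametric q-model is at most the MDP efficiency bound EB(M_3).) Let (Ω, P) be a probability space, d a positive integer, W : Ω → ℝ, V : Ω → ℝ, and X : Ω → ℝ^d measurable, with V > 0 almost surely. Assume W²·V, ‖X‖²/V, and W·X are integrable. Let u = E[W X] ∈ ℝ^d and let M be the d × d matrix E[X Xᵀ / V]; assume M is positive definite. Then uᵀ M⁻¹ u ≤ E[W² V]. -/
open MeasureTheory Matrix

noncomputable section

/-- weighted Cauchy–Schwarz bound underlying Lemma 2: with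
`u = E[W X]` and `M = E[X Xᵀ / V]` positive definite, `uᵀ M⁻¹ u ≤ E[W² V]`. -/
theorem weighted_cauchy_schwarz_bound
    {Ω : Type*} [MeasurableSpace Ω] (Pm : Measure Ω) [IsProbabilityMeasure Pm]
    (d : ℕ) (hd : 0 < d)
    (W V : Ω → ℝ) (X : Ω → Fin d → ℝ)
    (hW : Measurable W) (hV : Measurable V) (hX : Measurable X)
    (hVpos : ∀ᵐ ω ∂Pm, 0 < V ω)
    (hint1 : Integrable (fun ω => W ω ^ 2 * V ω) Pm)
    (hint2 : Integrable (fun ω => (∑ i, X ω i ^ 2) / V ω) Pm)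
    (hint3 : Integrable (fun ω => W ω • X ω) Pm)
    (M : Matrix (Fin d) (Fin d) ℝ)
    (hM : M = Matrix.of fun i j => ∫ ω, X ω i * X ω j / V ω ∂Pm)
    (hMpd : M.PosDef) :
    (∫ ω, W ω • X ω ∂Pm) ⬝ᵥ (M⁻¹ *ᵥ ∫ ω, W ω • X ω ∂Pm) ≤
      ∫ ω, W ω ^ 2 * V ω ∂Pm := by
  set u := ∫ ω, W ω • X ω ∂Pm with hu
  set a := M⁻¹ *ᵥ u with ha
  have hXm : ∀ i, Measurable fun ω => X ω i := fun i => (measurable_pi_apply i).comp hX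
  have hij : ∀ i j, Integrable (fun ω => X ω i * X ω j / V ω) Pm := by
    intro i j
    refine hint2.mono' (((hXm i).mul (hXm j)).div hV).aestronglyMeasurable ?_
    filter_upwards [hVpos] with ω h
    rw [Real.norm_eq_abs, abs_div, abs_of_pos h]
    refine div_le_div_of_nonneg_right ?_ h.le
    have h1 : X ω i ^ 2 ≤ ∑ k, X ω k ^ 2 :=
      Finset.single_le_sum (f := fun k => X ω k ^ 2) (fun k _ => sq_nonneg _) (Finset.mem_univ i)
    have h2 : X ω j ^ 2 ≤ ∑ k, X ω k ^ 2 :=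
      Finset.single_le_sum (f := fun k => X ω k ^ 2) (fun k _ => sq_nonneg _) (Finset.mem_univ j)
    rw [abs_le]
    constructor <;> nlinarith [sq_nonneg (X ω i + X ω j), sq_nonneg (X ω i - X ω j)]
  have hi : ∀ i, Integrable (fun ω => W ω * X ω i) Pm := fun i => hint3.eval i
  have hui : ∀ i, u i = ∫ ω, W ω * X ω i ∂Pm := fun i =>
    eval_integral (f := fun ω => W ω • X ω) (fun i => hi i) i
  have hMa : M *ᵥ a = u := by
    rw [ha, Matrix.mulVec_mulVec, Matrix.mul_nonsing_inv _ ((Matrix.isUnit_iff_isUnit_det _).1 hMpd.isUnit),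
      Matrix.one_mulVec]
  have hI1 : Integrable (fun ω => ∑ i, a i * (W ω * X ω i)) Pm :=
    integrable_finsetSum _ fun i _ => (hi i).const_mul _
  have hI2 : Integrable (fun ω => ∑ i, ∑ j, a i * a j * (X ω i * X ω j / V ω)) Pm :=
    integrable_finsetSum _ fun i _ => integrable_finsetSum _ fun j _ => (hij i j).const_mul _
  have e1 : ∫ ω, ∑ i, a i * (W ω * X ω i) ∂Pm = u ⬝ᵥ a := by
    rw [integral_finsetSum _ fun i _ => (hi i).const_mul _]
    simp only [integral_const_mul, ← hui, dotProduct]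
    exact Finset.sum_congr rfl fun i _ => mul_comm _ _
  have e2 : ∫ ω, ∑ i, ∑ j, a i * a j * (X ω i * X ω j / V ω) ∂Pm = u ⬝ᵥ a := by
    rw [integral_finsetSum _ fun i _ =>
      integrable_finsetSum _ fun j _ => (hij i j).const_mul _]
    have : ∀ i, ∫ ω, ∑ j, a i * a j * (X ω i * X ω j / V ω) ∂Pm = u i * a i := by
      intro i
      rw [integral_finsetSum _ fun j _ => (hij i j).const_mul _, ← hMa]
      simp only [integral_const_mul, Matrix.mulVec, dotProduct, Finset.sum_mul]
      refine Finset.sum_congr rfl fun j _ => ?_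
      rw [hM, Matrix.of_apply]
      ring
    simp only [this, dotProduct]
  have key : 0 ≤ ∫ ω, (W ω ^ 2 * V ω - 2 * (∑ i, a i * (W ω * X ω i))
      + ∑ i, ∑ j, a i * a j * (X ω i * X ω j / V ω)) ∂Pm := by
    refine integral_nonneg_of_ae ?_
    filter_upwards [hVpos] with ω h
    have f1 : ∑ i, a i * (W ω * X ω i) = W ω * ∑ i, a i * X ω i := by
      rw [Finset.mul_sum]
      exact Finset.sum_congr rfl fun i _ => by ring
    have f2 : ∑ i, ∑ j, a i * a j * (X ω i * X ω j / V ω) = (∑ i, a i * X ω i) ^ 2 / V ω := by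
      rw [sq, Finset.sum_mul_sum, Finset.sum_div]
      refine Finset.sum_congr rfl fun i _ => ?_
      rw [Finset.sum_div]
      exact Finset.sum_congr rfl fun j _ => by ring
    rw [f1, f2]
    generalize ∑ i, a i * X ω i = s
    have : W ω ^ 2 * V ω - 2 * (W ω * s) + s ^ 2 / V ω = (W ω * V ω - s) ^ 2 / V ω := by
      field_simp
      ring
    rw [this]
    exact div_nonneg (sq_nonneg _) h.le
  have hI3 : Integrable (fun ω => W ω ^ 2 * V ω - 2 * (∑ i, a i * (W ω * X ω i))) Pm :=
    hint1.sub (hI1.const_mul 2)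
  rw [integral_add hI3 hI2, integral_sub hint1 (hI1.const_mul 2),
    integral_const_mul, e1, e2] at key
  linarith

end
end

section
/- (Matrix Cauchy–Schwarz / GMM efficiency bound underlying Theorem 17.) Let (Ω, P) be a probability space, F : Ω → ℝ^k, G : Ω → ℝ^d, and V : Ω → ℝ measurable with V > 0 almost surely; assume V·‖F‖², ‖G‖²/V, and ‖F‖·‖G‖ are integrable. If the d × d matrix N = E[G Gᵀ / V] is positive definite, then the k × k matrix E[V · F Fᵀ] − E[F Gᵀ] N⁻¹ E[G Fᵀ] is positive semidefinite. Consequently, if k = d and A = E[F Gᵀ] is invertible, then A⁻¹ E[V F Fᵀ] (A⁻¹)ᵀ − N⁻¹ is positive semidefinite (the GMM sandwich variance with instrument F is bounded below in the Loewner order by (E[G Gᵀ / V])⁻¹), with equality when F = G/V almost surely. -/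
open MeasureTheory Matrix

noncomputable section

/-- A weighted Gram matrix of integrals is positive semidefinite. -/
theorem gram_posSemidef {Ω : Type*} [MeasurableSpace Ω] (Pm : Measure Ω)
    {n : Type*} [Fintype n] (V : Ω → ℝ) (H : Ω → n → ℝ)
    (hVpos : ∀ᵐ ω ∂Pm, 0 < V ω)
    (hint : ∀ i j, Integrable (fun ω => V ω * (H ω i * H ω j)) Pm) :
    (Matrix.of fun i j => ∫ ω, V ω * (H ω i * H ω j) ∂Pm).PosSemidef := by
  refine Matrix.PosSemidef.of_dotProduct_mulVec_nonneg ?_ ?_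
  · ext i j
    simp [Matrix.conjTranspose_apply, mul_comm (H _ i)]
  · intro x
    have h : star x ⬝ᵥ (Matrix.of fun i j => ∫ ω, V ω * (H ω i * H ω j) ∂Pm) *ᵥ x
        = ∫ ω, V ω * (∑ i, x i * H ω i) ^ 2 ∂Pm := by
      have e : ∀ ω, V ω * (∑ i, x i * H ω i) ^ 2
          = ∑ i, ∑ j, (x i * x j) * (V ω * (H ω i * H ω j)) := by
        intro ω
        rw [sq, Finset.sum_mul_sum, Finset.mul_sum]
        refine Finset.sum_congr rfl fun i _ => ?_
        rw [Finset.mul_sum]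
        exact Finset.sum_congr rfl fun j _ => by ring
      simp_rw [e]
      rw [integral_finsetSum _ fun i _ => integrable_finsetSum _ fun j _ => (hint i j).const_mul _]
      simp only [dotProduct, mulVec, Matrix.of_apply, Pi.star_apply, star_trivial]
      refine Finset.sum_congr rfl fun i _ => ?_
      rw [integral_finsetSum _ fun j _ => (hint i j).const_mul _, Finset.mul_sum]
      refine Finset.sum_congr rfl fun j _ => ?_
      rw [integral_const_mul]
      ring
    rw [h]
    refine integral_nonneg_of_ae ?_
    filter_upwards [hVpos] with ω hω
    exact mul_nonneg hω.le (sq_nonneg _)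

theorem abs_le_sqrt_sum {n : Type*} [Fintype n] (f : n → ℝ) (i : n) :
    |f i| ≤ Real.sqrt (∑ i, f i ^ 2) := by
  refine Real.abs_le_sqrt ?_
  exact Finset.single_le_sum (f := fun i => f i ^ 2) (fun j _ => sq_nonneg _) (Finset.mem_univ i)

theorem abs_mul_le_sum {n : Type*} [Fintype n] (f : n → ℝ) (i j : n) :
    |f i * f j| ≤ ∑ i, f i ^ 2 := by
  rw [abs_mul, ← Real.mul_self_sqrt (Finset.sum_nonneg fun i _ => sq_nonneg (f i))]
  exact mul_le_mul (abs_le_sqrt_sum f i) (abs_le_sqrt_sum f j) (abs_nonneg _) (Real.sqrt_nonneg _)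

theorem gmm_first
    {Ω : Type*} [MeasurableSpace Ω] (Pm : Measure Ω)
    (k d : ℕ)
    (V : Ω → ℝ) (F : Ω → Fin k → ℝ) (G : Ω → Fin d → ℝ)
    (hV : Measurable V) (hF : Measurable F) (hG : Measurable G)
    (hVpos : ∀ᵐ ω ∂Pm, 0 < V ω)
    (hintF : Integrable (fun ω => V ω * ∑ i, F ω i ^ 2) Pm)
    (hintG : Integrable (fun ω => (∑ j, G ω j ^ 2) / V ω) Pm)
    (hintFG : Integrable (fun ω =>
      Real.sqrt (∑ i, F ω i ^ 2) * Real.sqrt (∑ j, G ω j ^ 2)) Pm)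
    (N : Matrix (Fin d) (Fin d) ℝ)
    (hN : N = Matrix.of fun i j => ∫ ω, G ω i * G ω j / V ω ∂Pm)
    (hNpd : N.PosDef)
    (EVFF : Matrix (Fin k) (Fin k) ℝ)
    (hEVFF : EVFF = Matrix.of fun i j => ∫ ω, V ω * (F ω i * F ω j) ∂Pm)
    (EFG : Matrix (Fin k) (Fin d) ℝ)
    (hEFG : EFG = Matrix.of fun i j => ∫ ω, F ω i * G ω j ∂Pm) :
    (EVFF - EFG * N⁻¹ * EFGᴴ).PosSemidef := by
  have hFi : ∀ i, Measurable fun ω => F ω i := fun i => (measurable_pi_apply i).comp hF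
  have hGi : ∀ i, Measurable fun ω => G ω i := fun i => (measurable_pi_apply i).comp hG
  have iFF : ∀ i j, Integrable (fun ω => V ω * (F ω i * F ω j)) Pm := by
    intro i j
    refine hintF.mono' (hV.mul ((hFi i).mul (hFi j))).aestronglyMeasurable ?_
    filter_upwards [hVpos] with ω hω
    rw [Real.norm_eq_abs, abs_mul, abs_of_pos hω]
    exact mul_le_mul_of_nonneg_left (abs_mul_le_sum (F ω) i j) hω.le
  have iGG : ∀ i j, Integrable (fun ω => G ω i * G ω j / V ω) Pm := by
    intro i j
    refine hintG.mono' (((hGi i).mul (hGi j)).div hV).aestronglyMeasurable ?_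
    filter_upwards [hVpos] with ω hω
    rw [Real.norm_eq_abs, abs_div, abs_of_pos hω]
    exact div_le_div_of_nonneg_right (abs_mul_le_sum (G ω) i j) hω.le
  have iFG : ∀ i j, Integrable (fun ω => F ω i * G ω j) Pm := by
    intro i j
    refine hintFG.mono' ((hFi i).mul (hGi j)).aestronglyMeasurable ?_
    filter_upwards with ω
    rw [Real.norm_eq_abs, abs_mul]
    exact mul_le_mul (abs_le_sqrt_sum (F ω) i) (abs_le_sqrt_sum (G ω) j) (abs_nonneg _)
      (Real.sqrt_nonneg _)
  let H : Ω → Fin k ⊕ Fin d → ℝ := fun ω => Sum.elim (F ω) (fun j => G ω j / V ω)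
  have e12 : ∀ i j, (fun ω => F ω i * G ω j) =ᵐ[Pm]
      fun ω => V ω * (H ω (Sum.inl i) * H ω (Sum.inr j)) := by
    intro i j
    filter_upwards [hVpos] with ω hω
    simp only [H, Sum.elim_inl, Sum.elim_inr]
    field_simp
  have e21 : ∀ i j, (fun ω => F ω i * G ω j) =ᵐ[Pm]
      fun ω => V ω * (H ω (Sum.inr j) * H ω (Sum.inl i)) := by
    intro i j
    filter_upwards [hVpos] with ω hω
    simp only [H, Sum.elim_inl, Sum.elim_inr]
    field_simp
  have e22 : ∀ i j, (fun ω => G ω i * G ω j / V ω) =ᵐ[Pm]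
      fun ω => V ω * (H ω (Sum.inr i) * H ω (Sum.inr j)) := by
    intro i j
    filter_upwards [hVpos] with ω hω
    simp only [H, Sum.elim_inr]
    field_simp
  have key := gram_posSemidef Pm V H hVpos (by
    rintro (i | i) (j | j)
    · exact iFF i j
    · exact (iFG i j).congr (e12 i j)
    · exact (iFG j i).congr (e21 j i)
    · exact (iGG i j).congr (e22 i j))
  have : Invertible N := hNpd.isUnit.invertible
  rw [← Matrix.PosDef.fromBlocks₂₂ EVFF EFG hNpd]
  have e : fromBlocks EVFF EFG EFGᴴ N
      = Matrix.of fun i j => ∫ ω, V ω * (H ω i * H ω j) ∂Pm := by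
    ext i j
    rcases i with i | i <;> rcases j with j | j
    · simp [hEVFF, H]
    · simpa [hEFG] using integral_congr_ae (e12 i j)
    · simpa [hEFG] using integral_congr_ae (e21 j i)
    · simpa [hN] using integral_congr_ae (e22 i j)
  rw [e]
  exact key

/-- matrix Cauchy–Schwarz / GMM efficiency bound underlying Theorem 17:
`E[V F Fᵀ] − E[F Gᵀ] N⁻¹ E[G Fᵀ]` is positive semidefinite where `N = E[G Gᵀ / V]`;
consequently, in the square case the GMM sandwich variance with instrument `F` is
bounded below in the Loewner order by `N⁻¹`, with equality when `F = G / V` a.s. -/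
theorem gmm_efficiency_bound
    {Ω : Type*} [MeasurableSpace Ω] (Pm : Measure Ω) [IsProbabilityMeasure Pm]
    (k d : ℕ)
    (V : Ω → ℝ) (F : Ω → Fin k → ℝ) (G : Ω → Fin d → ℝ)
    (hV : Measurable V) (hF : Measurable F) (hG : Measurable G)
    (hVpos : ∀ᵐ ω ∂Pm, 0 < V ω)
    (hintF : Integrable (fun ω => V ω * ∑ i, F ω i ^ 2) Pm)
    (hintG : Integrable (fun ω => (∑ j, G ω j ^ 2) / V ω) Pm)
    (hintFG : Integrable (fun ω =>
      Real.sqrt (∑ i, F ω i ^ 2) * Real.sqrt (∑ j, G ω j ^ 2)) Pm)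
    (N : Matrix (Fin d) (Fin d) ℝ)
    (hN : N = Matrix.of fun i j => ∫ ω, G ω i * G ω j / V ω ∂Pm)
    (hNpd : N.PosDef)
    (EVFF : Matrix (Fin k) (Fin k) ℝ)
    (hEVFF : EVFF = Matrix.of fun i j => ∫ ω, V ω * (F ω i * F ω j) ∂Pm)
    (EFG : Matrix (Fin k) (Fin d) ℝ)
    (hEFG : EFG = Matrix.of fun i j => ∫ ω, F ω i * G ω j ∂Pm)
    (EGF : Matrix (Fin d) (Fin k) ℝ)
    (hEGF : EGF = Matrix.of fun i j => ∫ ω, G ω i * F ω j ∂Pm) :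
    (EVFF - EFG * N⁻¹ * EGF).PosSemidef ∧
      ∀ F' : Ω → Fin d → ℝ, Measurable F' →
        Integrable (fun ω => V ω * ∑ i, F' ω i ^ 2) Pm →
        Integrable (fun ω =>
          Real.sqrt (∑ i, F' ω i ^ 2) * Real.sqrt (∑ j, G ω j ^ 2)) Pm →
        ∀ A EVF'F' : Matrix (Fin d) (Fin d) ℝ,
          A = Matrix.of (fun i j => ∫ ω, F' ω i * G ω j ∂Pm) →
          EVF'F' = Matrix.of (fun i j => ∫ ω, V ω * (F' ω i * F' ω j) ∂Pm) →
          IsUnit A.det →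
          (A⁻¹ * EVF'F' * (A⁻¹)ᵀ - N⁻¹).PosSemidef ∧
            ((∀ᵐ ω ∂Pm, F' ω = fun i => G ω i / V ω) →
              A⁻¹ * EVF'F' * (A⁻¹)ᵀ = N⁻¹) := by
  refine ⟨?_, ?_⟩
  · have h := gmm_first Pm k d V F G hV hF hG hVpos hintF hintG hintFG N hN hNpd EVFF hEVFF EFG hEFG
    have e : EGF = EFGᴴ := by
      ext i j
      simp [hEGF, hEFG, mul_comm]
    rwa [e]
  · intro F' hF' hi1 hi2 A W hA hW hdet
    have h := gmm_first Pm d d V F' G hV hF' hG hVpos hi1 hintG hi2 N hN hNpd W hW A hA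
    have hdetT : IsUnit (Aᵀ).det := by rwa [Matrix.det_transpose]
    refine ⟨?_, ?_⟩
    · have h2 := h.mul_mul_conjTranspose_same A⁻¹
      convert h2 using 1
      rw [Matrix.conjTranspose_eq_transpose_of_trivial, Matrix.conjTranspose_eq_transpose_of_trivial,
        Matrix.mul_sub, Matrix.sub_mul]
      congr 1
      rw [Matrix.transpose_nonsing_inv, ← Matrix.mul_assoc, ← Matrix.mul_assoc,
        Matrix.nonsing_inv_mul _ hdet, Matrix.one_mul, Matrix.mul_assoc,
        Matrix.mul_nonsing_inv _ hdetT, Matrix.mul_one]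
    · intro hFG
      have hAN : A = N := by
        rw [hA, hN]
        ext i j
        refine integral_congr_ae ?_
        filter_upwards [hFG] with ω hω
        simp only [hω]
        ring
      have hWN : W = N := by
        rw [hW, hN]
        ext i j
        refine integral_congr_ae ?_
        filter_upwards [hFG, hVpos] with ω hω hv
        simp only [hω]
        field_simp
      have hNT : Nᵀ = N := by
        rw [← Matrix.conjTranspose_eq_transpose_of_trivial]; exact hNpd.1
      rw [hAN] at hdet
      rw [hAN, hWN, Matrix.transpose_nonsing_inv, hNT, Matrix.nonsing_inv_mul _ hdet,
        Matrix.one_mul]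

end
end
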